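/- For every integer k ≥ 4, (1/2) ∑_{j=2}^{k−2} T(j) T(k−j) = ∑_{ν=2}^{k−2} (2^{ν−1} − 1) T(k−ν, ν) + (2^{k−2} − 2) T(1, k−1). -/

import Mathlib

/-- The multiple T-value `T(k₁, …, k_r)`:
`2^r` times the sum over `0 < m₁ < ⋯ < m_r` with `m_i ≡ i (mod 2)`
of `1 / (m₁^{k₁} ⋯ m_r^{k_r})`. -/
noncomputable def MTV (k : List ℕ) : ℝ :=
  2 ^ k.length *
    ∑' f : {f : Fin k.length → ℕ // StrictMono f ∧ ∀ i, f i % 2 = ((i : ℕ) + 1) % 2},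
      ∏ i : Fin k.length, (1 : ℝ) / (f.1 i : ℝ) ^ k.get i

/-! With `x = 1/m`, `y = 1/n` and `z = 1/(m + n)`, where `m` and `n` run over the odd numbers,
`T(i) T(j)` is four times the sum of `x ^ i y ^ j`, and `T(u, v)` is twice the sum of
`(x ^ u + y ^ u) z ^ v`. Induction on `N` using `z (x + y) = x y` gives
`(x + y) ∑_{i + j = N} x ^ i y ^ j = ∑_{i + j = N} (2 z) ^ i (x ^ (j + 1) + y ^ (j + 1))` and
`(x + y) (x ^ N + y ^ N) = ∑_{i + j = N} z ^ i (x ^ (j + 1) + y ^ (j + 1)) + z ^ N (x + y)`.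
For `N = k - 2`, the difference multiplied by `z` is the termwise form of the identity: on the left
the subtraction removes the two extreme products, and on the right `2 ^ i` becomes `2 ^ i - 1`. -/

open Finset

section Algebra

lemma sum_Icc_eq_sum_antidiagonal {M : Type*} [AddCommMonoid M] (f : ℕ → ℕ → M) {a b k n : ℕ}
    (hk : k = n + a + b) :
    ∑ j ∈ Icc a (k - b), f j (k - j) = ∑ p ∈ antidiagonal n, f (p.1 + a) (p.2 + b) := by
  subst hk
  rw [Nat.sum_antidiagonal_eq_sum_range_succ (fun i j => f (i + a) (j + b)), Nat.add_sub_cancel,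
    ← Ico_add_one_right_eq_Icc, sum_Ico_eq_sum_range, Nat.add_right_comm, Nat.add_sub_cancel]
  refine sum_congr rfl fun i hi => ?_
  have hin : i < n + 1 := mem_range.mp hi
  congr 1 <;> omega

lemma sum_antidiagonal_add_two {M : Type*} [AddCommMonoid M] (f : ℕ × ℕ → M) (n : ℕ) :
    ∑ p ∈ antidiagonal (n + 2), f p =
      f (0, n + 2) + f (n + 2, 0) + ∑ p ∈ antidiagonal n, f (p.1 + 1, p.2 + 1) := by
  rw [Nat.sum_antidiagonal_succ, Nat.sum_antidiagonal_succ', ← add_assoc]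

lemma inv_add_mul_add_inv {K : Type*} [Field K] {m n : K} (hm : m ≠ 0) (hn : n ≠ 0)
    (hmn : m + n ≠ 0) : (m + n)⁻¹ * (m⁻¹ + n⁻¹) = m⁻¹ * n⁻¹ := by
  field_simp
  ring

variable {R : Type*} [CommRing R] {x y z : R}

lemma add_mul_sum_antidiagonal_pow_mul_pow (h : z * (x + y) = x * y) (n : ℕ) :
    (x + y) * ∑ p ∈ antidiagonal n, x ^ p.1 * y ^ p.2 =
      ∑ p ∈ antidiagonal n, (2 * z) ^ p.1 * (x ^ (p.2 + 1) + y ^ (p.2 + 1)) := by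
  induction n with
  | zero => simp
  | succ n ih =>
    set H := ∑ p ∈ antidiagonal n, x ^ p.1 * y ^ p.2
    have peel_x : ∑ p ∈ antidiagonal (n + 1), x ^ p.1 * y ^ p.2 = y ^ (n + 1) + x * H := by
      simp only [Nat.sum_antidiagonal_succ, pow_succ', pow_zero, one_mul, mul_assoc, ← mul_sum, H]
    have peel_y : ∑ p ∈ antidiagonal (n + 1), x ^ p.1 * y ^ p.2 = x ^ (n + 1) + y * H := by
      simp only [Nat.sum_antidiagonal_succ', pow_succ', pow_zero, mul_one, mul_left_comm _ y,
        ← mul_sum, H]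
    have peel_z : ∑ p ∈ antidiagonal (n + 1), (2 * z) ^ p.1 * (x ^ (p.2 + 1) + y ^ (p.2 + 1)) =
        x ^ (n + 2) + y ^ (n + 2) + 2 * z * ((x + y) * H) := by
      simp only [Nat.sum_antidiagonal_succ, pow_succ' (2 * z), pow_zero, one_mul, mul_assoc,
        ← mul_sum, ih]
    rw [peel_z]
    linear_combination x * peel_y + y * peel_x - 2 * H * h

lemma add_mul_pow_add_pow (h : z * (x + y) = x * y) (n : ℕ) :
    (x + y) * (x ^ n + y ^ n) =
      ∑ p ∈ antidiagonal n, z ^ p.1 * (x ^ (p.2 + 1) + y ^ (p.2 + 1)) + z ^ n * (x + y) := by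
  induction n with
  | zero =>
    simp only [Nat.antidiagonal_zero, sum_singleton, pow_zero, zero_add, pow_one, one_mul]
    ring
  | succ n ih =>
    simp only [Nat.sum_antidiagonal_succ, pow_succ' z, pow_zero, one_mul, mul_assoc, ← mul_sum]
    linear_combination z * ih - (x ^ n + y ^ n) * h

lemma sum_antidiagonal_pow_mul_pow (h : z * (x + y) = x * y) (n : ℕ) :
    ∑ p ∈ antidiagonal n, x ^ (p.1 + 2) * y ^ (p.2 + 2) =
      ∑ p ∈ antidiagonal n,
          (2 ^ (p.1 + 1) - 1) * ((x ^ (p.2 + 2) + y ^ (p.2 + 2)) * z ^ (p.1 + 2)) +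
        (2 ^ (n + 2) - 2) * ((x + y) * z ^ (n + 3)) := by
  have complete := add_mul_sum_antidiagonal_pow_mul_pow h (n + 2)
  have extremal := add_mul_pow_add_pow h (n + 2)
  have interior : ∑ p ∈ antidiagonal (n + 2), x ^ p.1 * y ^ p.2 =
      x ^ (n + 2) + y ^ (n + 2) + x * y * ∑ p ∈ antidiagonal n, x ^ p.1 * y ^ p.2 := by
    rw [sum_antidiagonal_add_two, mul_sum]
    congr 1
    · ring
    · exact sum_congr rfl fun p _ => by ring
  have factor : ∑ p ∈ antidiagonal n, x ^ (p.1 + 2) * y ^ (p.2 + 2) =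
      (x * y) ^ 2 * ∑ p ∈ antidiagonal n, x ^ p.1 * y ^ p.2 := by
    rw [mul_sum]
    exact sum_congr rfl fun p _ => by ring
  have difference :
      z * (∑ p ∈ antidiagonal (n + 2), (2 * z) ^ p.1 * (x ^ (p.2 + 1) + y ^ (p.2 + 1)) -
          ∑ p ∈ antidiagonal (n + 2), z ^ p.1 * (x ^ (p.2 + 1) + y ^ (p.2 + 1))) =
        ∑ p ∈ antidiagonal n,
            (2 ^ (p.1 + 1) - 1) * ((x ^ (p.2 + 2) + y ^ (p.2 + 2)) * z ^ (p.1 + 2)) +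
          (2 ^ (n + 2) - 1) * ((x + y) * z ^ (n + 3)) := by
    rw [← sum_sub_distrib, sum_antidiagonal_add_two, mul_add, mul_sum, add_comm]
    congr 1
    · exact sum_congr rfl fun p _ => by ring
    · ring
  rw [interior] at complete
  linear_combination factor + z * complete - z * extremal + difference -
    x * y * (∑ p ∈ antidiagonal n, x ^ p.1 * y ^ p.2) * h

end Algebra

section TValues

/-- The odd natural numbers, over which the summation variables of the T-values range. -/
abbrev OddNat : Type := {m : ℕ // Odd m}

/-- The summation index of a multiple T-value of depth `r`. -/
abbrev MTVIndex (r : ℕ) : Type :=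
  {f : Fin r → ℕ // StrictMono f ∧ ∀ i, f i % 2 = ((i : ℕ) + 1) % 2}

/-- An index of depth one is its only entry. -/
def MTVIndex.equivOddNat : MTVIndex 1 ≃ OddNat where
  toFun f := ⟨f.1 0, Nat.odd_iff.mpr (f.2.2 0)⟩
  invFun m := ⟨fun _ => m, Subsingleton.strictMono _, fun i => by
    simpa [Subsingleton.elim i 0] using Nat.odd_iff.mp m.2⟩
  left_inv f := Subtype.ext (funext fun i => by simp [Subsingleton.elim i 0])
  right_inv _ := rfl

/-- An index `m₁ < m₂` of depth two corresponds to the pair `(m₁, m₂ - m₁)` of odd numbers. -/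
def MTVIndex.equivOddNatProd : MTVIndex 2 ≃ OddNat × OddNat where
  toFun f := (⟨f.1 0, Nat.odd_iff.mpr (f.2.2 0)⟩, ⟨f.1 1 - f.1 0, by
    have odd_zero : f.1 0 % 2 = 1 := f.2.2 0
    have even_one : f.1 1 % 2 = 0 := f.2.2 1
    have lt : f.1 0 < f.1 1 := f.2.1 Fin.zero_lt_one
    rw [Nat.odd_iff]
    omega⟩)
  invFun p := ⟨![p.1, p.1 + p.2],
    Fin.strictMono_iff_lt_succ.mpr fun i => by simpa [Subsingleton.elim i 0] using p.2.2.pos,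
    Fin.forall_fin_two.mpr ⟨Nat.odd_iff.mp p.1.2, Nat.even_iff.mp (p.1.2.add_odd p.2.2)⟩⟩
  left_inv f := Subtype.ext <| funext <| Fin.forall_fin_two.mpr
    ⟨rfl, Nat.add_sub_of_le (f.2.1 Fin.zero_lt_one).le⟩
  right_inv p := Prod.ext rfl (Subtype.ext (Nat.add_sub_cancel_left ..))

lemma MTV_singleton (j : ℕ) : MTV [j] = 2 * ∑' m : OddNat, (m : ℝ)⁻¹ ^ j := by
  rw [← MTVIndex.equivOddNat.tsum_eq]
  simp [MTV, MTVIndex.equivOddNat]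

lemma MTV_pair (u v : ℕ) :
    MTV [u, v] = 4 * ∑' p : OddNat × OddNat, (p.1 : ℝ)⁻¹ ^ u * (p.1 + p.2 : ℝ)⁻¹ ^ v := by
  calc MTV [u, v]
      = 2 ^ 2 * ∑' f : MTVIndex 2, ∏ i : Fin 2, (1 : ℝ) / (f.1 i : ℝ) ^ [u, v].get i := rfl
    _ = 4 * ∑' p : OddNat × OddNat, (p.1 : ℝ)⁻¹ ^ u * (p.1 + p.2 : ℝ)⁻¹ ^ v := by
        rw [← MTVIndex.equivOddNatProd.symm.tsum_eq]
        norm_num [MTVIndex.equivOddNatProd, mul_comm]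

lemma OddNat.summable_inv_rpow {s : ℝ} (hs : 1 < s) :
    Summable fun m : OddNat => (m : ℝ)⁻¹ ^ s := by
  have summable_nat : Summable fun m : ℕ => (m : ℝ)⁻¹ ^ s := by
    simpa only [Real.inv_rpow (Nat.cast_nonneg _)] using Real.summable_nat_rpow_inv.mpr hs
  exact summable_nat.subtype _

lemma OddNat.summable_inv_pow {j : ℕ} (hj : 2 ≤ j) :
    Summable fun m : OddNat => (m : ℝ)⁻¹ ^ j := by
  simpa only [Real.rpow_natCast] using OddNat.summable_inv_rpow (s := j) (by exact_mod_cast hj)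

lemma inv_pow_mul_inv_add_pow_le {m n : ℝ} (hm : 1 ≤ m) (hn : 0 < n) {u v : ℕ} (hu : 1 ≤ u)
    (hv : 2 ≤ v) :
    m⁻¹ ^ u * (m + n)⁻¹ ^ v ≤ m⁻¹ ^ (3 / 2 : ℝ) * n⁻¹ ^ (3 / 2 : ℝ) := by
  have : 0 < m := one_pos.trans_le hm
  have le_left : (m + n)⁻¹ ≤ m⁻¹ := by gcongr; linarith
  have le_right : (m + n)⁻¹ ≤ n⁻¹ := by gcongr; linarith
  have inv_le_one : m⁻¹ ≤ 1 := inv_le_one_of_one_le₀ hm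
  -- Of the exponent `2` of `(m + n)⁻¹`, `1 / 2` goes to `m⁻¹` and `3 / 2` to `n⁻¹`, so that both
  -- resulting exponents exceed `1`.
  calc m⁻¹ ^ u * (m + n)⁻¹ ^ v
      ≤ m⁻¹ ^ 1 * (m + n)⁻¹ ^ 2 := by
        gcongr ?_ * ?_
        · exact pow_le_pow_of_le_one (by positivity) inv_le_one hu
        · exact pow_le_pow_of_le_one (by positivity) (le_left.trans inv_le_one) hv
    _ = m⁻¹ * ((m + n)⁻¹ ^ (1 / 2 : ℝ) * (m + n)⁻¹ ^ (3 / 2 : ℝ)) := by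
        rw [← Real.rpow_add (by positivity)]
        norm_num
    _ ≤ m⁻¹ * (m⁻¹ ^ (1 / 2 : ℝ) * n⁻¹ ^ (3 / 2 : ℝ)) := by gcongr
    _ = m⁻¹ ^ (3 / 2 : ℝ) * n⁻¹ ^ (3 / 2 : ℝ) := by
        rw [← mul_assoc, ← Real.rpow_one_add' (by positivity) (by norm_num)]
        norm_num

lemma summable_inv_pow_mul_inv_add_pow {u v : ℕ} (hu : 1 ≤ u) (hv : 2 ≤ v) :
    Summable fun p : OddNat × OddNat => (p.1 : ℝ)⁻¹ ^ u * (p.1 + p.2 : ℝ)⁻¹ ^ v := by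
  have summable_three_halves : Summable fun m : OddNat => (m : ℝ)⁻¹ ^ (3 / 2 : ℝ) :=
    OddNat.summable_inv_rpow (by norm_num)
  refine .of_nonneg_of_le (fun p => by positivity) (fun p => ?_)
    (summable_three_halves.mul_of_nonneg summable_three_halves
      (fun m => by positivity) (fun m => by positivity))
  exact inv_pow_mul_inv_add_pow_le (mod_cast p.1.2.pos) (mod_cast p.2.2.pos) hu hv

lemma hasSum_MTV_singleton_mul {i j : ℕ} (hi : 2 ≤ i) (hj : 2 ≤ j) :
    HasSum (fun p : OddNat × OddNat => (p.1 : ℝ)⁻¹ ^ i * (p.2 : ℝ)⁻¹ ^ j)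
      (MTV [i] * MTV [j] / 4) := by
  have summable_i := OddNat.summable_inv_pow hi
  have summable_j := OddNat.summable_inv_pow hj
  have value : MTV [i] * MTV [j] / 4 =
      (∑' m : OddNat, (m : ℝ)⁻¹ ^ i) * ∑' m : OddNat, (m : ℝ)⁻¹ ^ j := by
    rw [MTV_singleton, MTV_singleton]
    ring
  rw [value]
  exact summable_i.hasSum.mul summable_j.hasSum
    (summable_i.mul_of_nonneg summable_j (fun m => by positivity) (fun m => by positivity))

lemma hasSum_MTV_pair {u v : ℕ} (hu : 1 ≤ u) (hv : 2 ≤ v) :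
    HasSum (fun p : OddNat × OddNat =>
      ((p.1 : ℝ)⁻¹ ^ u + (p.2 : ℝ)⁻¹ ^ u) * (p.1 + p.2 : ℝ)⁻¹ ^ v) (MTV [u, v] / 2) := by
  have left := (summable_inv_pow_mul_inv_add_pow hu hv).hasSum
  have right := (Equiv.prodComm OddNat OddNat).hasSum_iff.mpr left
  convert left.add right using 1
  · funext p
    simp only [Function.comp_apply, Equiv.prodComm_apply, Prod.fst_swap, Prod.snd_swap]
    ring
  · rw [MTV_pair]
    ring

protected lemma OddNat.inv_add_mul_add_inv (m n : OddNat) :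
    (m + n : ℝ)⁻¹ * ((m : ℝ)⁻¹ + (n : ℝ)⁻¹) = (m : ℝ)⁻¹ * (n : ℝ)⁻¹ := by
  have hm : (0 : ℝ) < m := mod_cast m.2.pos
  have hn : (0 : ℝ) < n := mod_cast n.2.pos
  exact inv_add_mul_add_inv hm.ne' hn.ne' (add_pos hm hn).ne'

end TValues

/-- **Lemma.** For every integer `k ≥ 4`,
`(1/2) ∑_{j=2}^{k−2} T(j) T(k−j)
  = ∑_{ν=2}^{k−2} (2^{ν−1} − 1) T(k−ν, ν) + (2^{k−2} − 2) T(1, k−1)`. -/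
theorem MTV_sum_of_products (k : ℕ) (hk : 4 ≤ k) :
    (1 / 2) * ∑ j ∈ Finset.Icc 2 (k - 2), MTV [j] * MTV [k - j]
      = (∑ ν ∈ Finset.Icc 2 (k - 2), ((2 : ℝ) ^ (ν - 1) - 1) * MTV [k - ν, ν])
        + ((2 : ℝ) ^ (k - 2) - 2) * MTV [1, k - 1] := by
  obtain ⟨n, rfl⟩ := Nat.exists_eq_add_of_le' hk
  have products := hasSum_sum (s := antidiagonal n) fun p _ =>
    hasSum_MTV_singleton_mul (Nat.le_add_left 2 p.1) (Nat.le_add_left 2 p.2)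
  have doubles := hasSum_sum (s := antidiagonal n) fun p _ =>
    (hasSum_MTV_pair (u := p.2 + 2) (by omega) (Nat.le_add_left 2 p.1)).mul_left
      ((2 : ℝ) ^ (p.1 + 1) - 1)
  have boundary := (hasSum_MTV_pair (v := n + 3) le_rfl (by omega)).mul_left
    ((2 : ℝ) ^ (n + 2) - 2)
  have sum_eq := products.unique <| (doubles.add boundary).congr_fun fun p => by
    simpa only [pow_one] using sum_antidiagonal_pow_mul_pow (OddNat.inv_add_mul_add_inv p.1 p.2) n
  have hn : n + 4 = n + 2 + 2 := rfl
  rw [sum_Icc_eq_sum_antidiagonal (fun i j => MTV [i] * MTV [j]) hn,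
    sum_Icc_eq_sum_antidiagonal (fun i j => ((2 : ℝ) ^ (i - 1) - 1) * MTV [j, i]) hn]
  simp only [← sum_div, ← mul_div_assoc] at sum_eq
  simp only [Nat.reduceSubDiff]
  linear_combination 2 * sum_eq
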